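/- There is an absolute constant C > 0 such that for every integer m ≥ 3 there is a constant c_m > 0 with the property that for all p ∈ (0,1), f(K_m, p) ≥ c_m · p^(−((2−√2)m − C)). -/

import Mathlib

open scoped Classical

namespace OnlineRamseyGame

/-- A valid Builder strategy: it never builds a loop, and along any play the
edges built are pairwise distinct. -/
def ValidBuilder {V : Type*} (B : List Bool → Sym2 V) : Prop :=
  (∀ h : List Bool, ¬ (B h).IsDiag) ∧
  ∀ h : List Bool, ∀ i : ℕ, i < h.length → B (h.take i) ≠ B h

/-- The history (as a list) of the first `t` values of the color sequence `x`. -/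
def histSeq (x : ℕ → Bool) (t : ℕ) : List Bool := (List.range t).map x

/-- Extend a finite color sequence to an infinite one (by `false`). -/
def extSeq {N : ℕ} (x : Fin N → Bool) : ℕ → Bool :=
  fun t => if h : t < N then x ⟨t, h⟩ else false

/-- The probability of the outcome `x` when each turn is independently `true`
with probability `p` and `false` with probability `1 - p`. -/
noncomputable def weight (p : ℝ) {N : ℕ} (x : Fin N → Bool) : ℝ :=
  ∏ i, if x i then p else 1 - p

/-- The graph of successful queries (within the first `N` queries) contains a
copy of `H`. -/
def ContainsCopy {V : Type*} (H : SimpleGraph V) (edge : ℕ → Sym2 ℕ)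
    (x : ℕ → Bool) (N : ℕ) : Prop :=
  ∃ f : V → ℕ, Function.Injective f ∧
    ∀ u v : V, H.Adj u v → ∃ t, t < N ∧ edge t = s(f u, f v) ∧ x t = true

/-- The probability that strategy `Q` finds a copy of `H` within `N` queries in
the Subgraph Query Game with parameter `p`. -/
noncomputable def queryProb {V : Type*} (H : SimpleGraph V)
    (Q : List Bool → Sym2 ℕ) (N : ℕ) (p : ℝ) : ℝ :=
  ∑ x : Fin N → Bool, weight p x *
    (if ContainsCopy H (fun t => Q (histSeq (extSeq x) t)) (extSeq x) N then 1 else 0)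

/-- `f(H,p)`: the least `N` such that some valid strategy finds a copy of `H`
within `N` queries with probability at least `1/2`. -/
noncomputable def fQuery {V : Type*} (H : SimpleGraph V) (p : ℝ) : ℕ :=
  sInf {N | ∃ Q : List Bool → Sym2 ℕ, ValidBuilder Q ∧ (1 : ℝ) / 2 ≤ queryProb H Q N p}

/-- The complete graph on `m` vertices. -/
abbrev K (m : ℕ) : SimpleGraph (Fin m) := ⊤

/-!
A strategy succeeds with probability at most the expected number of copies of `H` that it builds.
For a graph `G` with `v` non-isolated vertices, `e` edges and a matching of size `s`, this
expectation is at most `2 ^ e * e! * N ^ (v - s) * p ^ (e - s * (s - 1))` after `N` queries, by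
induction on `e`. A copy is completed by a query playing the role of some edge `xy`, which gains a
factor `p` over the expected number of opportunities to make such a query.

* If `G - xy` keeps the non-isolated vertices of `G` and a matching of size `s`, each of its copies
  offers at most one opportunity, because a pair is queried only once.
* If `G - xy` keeps such a matching but loses a vertex, each copy offers up to `2 * N`
  opportunities, and the lost vertex pays for the factor `N`.
* Otherwise `xy` lies in every matching of size `s`. Exchanging edges of such a matching shows that
  at most `2 * s - 1` edges meet `x` or `y`. Isolating both loses these edges, two vertices and one
  edge of the matching, which again pays for the factor `N`.

For the complete graph on `m` vertices, the choice `s ≈ (1 - √2 / 2) * m` gives the exponent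
`(2 - √2) * m - 2`.
-/

/-- The expected value of `g`, a function of the whole sequence of answers, when the first `N`
answers are independent successes with probability `p`. Later answers are set to `false`, so `g`
should only depend on the first `N`. -/
noncomputable def expect (p : ℝ) (N : ℕ) (g : (ℕ → Bool) → ℝ) : ℝ :=
  ∑ x : Fin N → Bool, weight p x * g (extSeq x)

section Expectation

variable {p : ℝ} {N : ℕ} {f g : (ℕ → Bool) → ℝ}

lemma weight_nonneg (hp0 : 0 ≤ p) (hp1 : p ≤ 1) (x : Fin N → Bool) : 0 ≤ weight p x :=
  Finset.prod_nonneg fun i _ => by split_ifs <;> linarith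

lemma sum_weight (p : ℝ) (N : ℕ) : ∑ x : Fin N → Bool, weight p x = 1 := by
  simpa [weight] using
    (Fintype.prod_sum fun (_ : Fin N) (b : Bool) => if b then p else 1 - p).symm

lemma weight_update (p : ℝ) (x : Fin N → Bool) (t : Fin N) (b : Bool) :
    (if x t then p else 1 - p) * weight p (Function.update x t b) =
      (if b then p else 1 - p) * weight p x := by
  have hrest : ∏ i ∈ Finset.univ.erase t, (if Function.update x t b i then p else 1 - p) =
      ∏ i ∈ Finset.univ.erase t, if x i then p else 1 - p :=
    Finset.prod_congr rfl fun i hi => by rw [Function.update_of_ne (Finset.ne_of_mem_erase hi)]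
  simp only [weight, ← Finset.mul_prod_erase _ _ (Finset.mem_univ t), hrest, Function.update_self]
  ring

lemma extSeq_update (x : Fin N → Bool) {t : ℕ} (ht : t < N) (b : Bool) :
    extSeq (Function.update x ⟨t, ht⟩ b) = Function.update (extSeq x) t b := by
  funext i
  simp only [extSeq, Function.update_apply, Fin.ext_iff]
  split_ifs <;> first | rfl | omega

lemma expect_mono (hp0 : 0 ≤ p) (hp1 : p ≤ 1) (h : ∀ x, f x ≤ g x) :
    expect p N f ≤ expect p N g :=
  Finset.sum_le_sum fun x _ => mul_le_mul_of_nonneg_left (h _) (weight_nonneg hp0 hp1 x)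

lemma expect_const (p : ℝ) (N : ℕ) (c : ℝ) : expect p N (fun _ => c) = c := by
  simp only [expect, ← Finset.sum_mul, sum_weight, one_mul]

lemma expect_sum {ι : Type*} (p : ℝ) (N : ℕ) (s : Finset ι) (f : ι → (ℕ → Bool) → ℝ) :
    expect p N (fun x => ∑ i ∈ s, f i x) = ∑ i ∈ s, expect p N (f i) := by
  simp only [expect, Finset.mul_sum]
  exact Finset.sum_comm

lemma expect_sub (p : ℝ) (N : ℕ) (f g : (ℕ → Bool) → ℝ) :
    expect p N (fun x => f x - g x) = expect p N f - expect p N g := by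
  simp only [expect, mul_sub, Finset.sum_sub_distrib]

lemma expect_const_mul (p : ℝ) (N : ℕ) (c : ℝ) (g : (ℕ → Bool) → ℝ) :
    expect p N (fun x => c * g x) = c * expect p N g := by
  simp only [expect, mul_left_comm _ c, Finset.mul_sum]

lemma expect_ite_turn (p : ℝ) {t : ℕ} (ht : t < N)
    (hg : ∀ x b, g (Function.update x t b) = g x) :
    expect p N (fun x => if x t then g x else 0) = p * expect p N g := by
  rw [← sub_eq_zero, ← expect_const_mul, ← expect_sub]
  -- Flipping the answer at turn `t` changes the sign of each summand.
  let flip (x : Fin N → Bool) : Fin N → Bool := Function.update x ⟨t, ht⟩ (!x ⟨t, ht⟩)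
  refine Finset.sum_involution (fun x _ => flip x) (fun x _ => ?_)
    (fun x _ _ hfix => by simpa [flip] using congrFun hfix ⟨t, ht⟩)
    (fun _ _ => Finset.mem_univ _) (fun x _ => by simp [flip])
  have hw := weight_update p x ⟨t, ht⟩ (!x ⟨t, ht⟩)
  have hx : extSeq x t = x ⟨t, ht⟩ := by simp [extSeq, ht]
  simp only [flip, extSeq_update, hg, Function.update_self, hx]
  cases hxt : x ⟨t, ht⟩ <;>
    simp only [Bool.not_false, Bool.not_true, Bool.false_eq_true, if_true, if_false, hxt] at hw ⊢
  · linear_combination g (extSeq x) * hw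
  · linear_combination -g (extSeq x) * hw

lemma expect_ite_forall_turn (p : ℝ) {T : Finset ℕ} (hT : ∀ t ∈ T, t < N)
    (hg : ∀ t ∈ T, ∀ x b, g (Function.update x t b) = g x) :
    expect p N (fun x => if ∀ t ∈ T, x t then g x else 0) = p ^ T.card * expect p N g := by
  induction T using Finset.induction_on with
  | empty => simp
  | insert t T htT ih =>
    simp only [Finset.forall_mem_insert, ite_and] at hT hg ⊢
    have hinv : ∀ (x : ℕ → Bool) (b : Bool),
        (if ∀ i ∈ T, Function.update x t b i then g (Function.update x t b) else 0) =
          if ∀ i ∈ T, x i then g x else 0 := by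
      intro x b
      have hT' : (∀ i ∈ T, Function.update x t b i) ↔ ∀ i ∈ T, x i :=
        forall₂_congr fun i hi => by rw [Function.update_of_ne (ne_of_mem_of_not_mem hi htT)]
      simp only [hT', hg.1]
    rw [expect_ite_turn p hT.1 hinv, ih hT.2 hg.2, Finset.card_insert_of_notMem htT]
    ring

lemma expect_no_successful_block {ι : Type*} (p : ℝ) {s : Finset ι} {T : ι → Finset ℕ}
    (hT : ∀ i ∈ s, ∀ t ∈ T i, t < N) (hdisj : (s : Set ι).PairwiseDisjoint T) :
    expect p N (fun x => if ∃ i ∈ s, ∀ t ∈ T i, x t then 0 else 1) =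
      ∏ i ∈ s, (1 - p ^ (T i).card) := by
  induction s using Finset.induction_on with
  | empty => simp [expect_const]
  | insert i s his ih =>
    rw [Finset.coe_insert, Set.pairwiseDisjoint_insert_of_notMem (by simpa using his)] at hdisj
    rw [Finset.forall_mem_insert] at hT
    let g (x : ℕ → Bool) : ℝ := if ∃ j ∈ s, ∀ t ∈ T j, x t then 0 else 1
    have hg : ∀ t ∈ T i, ∀ x b, g (Function.update x t b) = g x := by
      intro t ht x b
      have hiff : (∃ j ∈ s, ∀ t' ∈ T j, Function.update x t b t') ↔ ∃ j ∈ s, ∀ t' ∈ T j, x t' := by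
        refine exists_congr fun j => and_congr_right fun hj => forall₂_congr fun t' ht' => ?_
        have hne : t' ≠ t := fun h =>
          Finset.disjoint_left.1 (hdisj.2 j hj) ht (h ▸ ht')
        rw [Function.update_of_ne hne]
      simp only [g, hiff]
    have hsplit : ∀ x : ℕ → Bool, (if ∃ j ∈ insert i s, ∀ t ∈ T j, x t then (0 : ℝ) else 1) =
        g x - if ∀ t ∈ T i, x t then g x else 0 := by
      intro x
      simp only [Finset.exists_mem_insert, g]
      split_ifs <;> simp_all
    simp only [hsplit]
    rw [expect_sub, expect_ite_forall_turn p hT.1 hg, Finset.prod_insert his, ← ih hT.2 hdisj.1]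
    ring

end Expectation

section ExistsStrategy

lemma histSeq_congr {x y : ℕ → Bool} {t : ℕ} (h : ∀ i < t, x i = y i) :
    histSeq x t = histSeq y t :=
  List.map_congr_left fun i hi => h i (List.mem_range.1 hi)

lemma length_histSeq (x : ℕ → Bool) (t : ℕ) : (histSeq x t).length = t := by
  simp [histSeq]

lemma take_histSeq (x : ℕ → Bool) {i t : ℕ} (h : i ≤ t) :
    (histSeq x t).take i = histSeq x i := by
  rw [histSeq, ← List.map_take, List.take_range, min_eq_left h, histSeq]

lemma ValidBuilder.injective_query {W : Type*} {Q : List Bool → Sym2 W} (hQ : ValidBuilder Q)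
    (x : ℕ → Bool) : Function.Injective fun t => Q (histSeq x t) :=
  .of_lt_imp_ne fun i j hij => by
    simpa only [take_histSeq x hij.le] using
      hQ.2 (histSeq x j) i (by rwa [length_histSeq])

lemma validBuilder_comp_length {W : Type*} {a : ℕ → Sym2 W} (ha : Function.Injective a)
    (hdiag : ∀ t, ¬ (a t).IsDiag) : ValidBuilder fun h => a h.length := by
  refine ⟨fun h => hdiag _, fun h i hi heq => ?_⟩
  have := ha heq
  rw [List.length_take] at this
  omega

lemma exists_injective_sym2_nat :
    ∃ a : ℕ → Sym2 ℕ, Function.Injective a ∧ Set.range a = {e | ¬ e.IsDiag} := by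
  have hinf : Infinite {e : Sym2 ℕ // ¬ e.IsDiag} :=
    Infinite.of_injective (fun n : ℕ => ⟨s(0, n + 1), by simp⟩) fun i j hij => by
      simpa using hij
  obtain ⟨a⟩ : Nonempty (ℕ ≃ {e : Sym2 ℕ // ¬ e.IsDiag}) := nonempty_equiv_of_countable
  exact ⟨fun n => a n, Subtype.val_injective.comp a.injective, by
    rw [← Function.comp_def, a.surjective.range_comp]
    exact Subtype.range_val⟩

lemma exists_pairwise_disjoint_copies {V : Type*} [Finite V] :
    ∃ f : ℕ → V → ℕ, (∀ k, Function.Injective (f k)) ∧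
      ∀ k k' v v', f k v = f k' v' → k = k' := by
  obtain ⟨m, ⟨ε⟩⟩ := Finite.exists_equiv_fin V
  refine ⟨fun k v => Nat.pair k (ε v), fun k v v' h => ?_, fun k k' v v' h => ?_⟩
  · exact ε.injective (Fin.ext (Nat.pair_eq_pair.1 h).2)
  · exact (Nat.pair_eq_pair.1 h).1

lemma exists_disjoint_blocks {V : Type*} [Finite V] (H : SimpleGraph V) :
    ∃ (a : ℕ → Sym2 ℕ) (T : ℕ → Finset ℕ), Function.Injective a ∧ (∀ t, ¬ (a t).IsDiag) ∧
      Pairwise (Function.onFun Disjoint T) ∧ (∀ k, (T k).card ≤ H.edgeSet.ncard) ∧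
      ∀ k, ∃ f : V → ℕ, Function.Injective f ∧ ∀ e ∈ H.edgeSet, ∃ t ∈ T k, a t = e.map f := by
  have := Fintype.ofFinite V
  obtain ⟨a, ha, hrange⟩ := exists_injective_sym2_nat
  obtain ⟨f, hf, hfdisj⟩ := exists_pairwise_disjoint_copies (V := V)
  have hturn : ∀ k, ∀ e ∈ H.edgeSet, ∃ t, a t = e.map (f k) := fun k e he =>
    hrange.superset (by simpa [Sym2.isDiag_map (hf k)] using H.not_isDiag_of_mem_edgeSet he)
  choose! τ hτ using hturn
  refine ⟨a, fun k => H.edgeFinset.image (τ k), ha, fun t => hrange.subset ⟨t, rfl⟩, ?_, ?_,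
    fun k => ⟨f k, hf k, fun e he => ⟨τ k e, ?_, hτ k e he⟩⟩⟩
  · intro k k' hkk'
    refine Finset.disjoint_left.2 fun t ht ht' => hkk' ?_
    simp only [Finset.mem_image, SimpleGraph.mem_edgeFinset] at ht ht'
    obtain ⟨e, he, rfl⟩ := ht
    obtain ⟨e', he', hee'⟩ := ht'
    have hmap : e'.map (f k') = e.map (f k) := by rw [← hτ k' e' he', hee', hτ k e he]
    induction e with | _ u v
    have hu : f k u ∈ e'.map (f k') := by simp [hmap]
    obtain ⟨w, -, hw⟩ := Sym2.mem_map.1 hu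
    exact (hfdisj _ _ _ _ hw).symm
  · intro k
    rw [Set.ncard_eq_toFinset_card', Set.toFinset_card, ← SimpleGraph.edgeFinset_card]
    exact Finset.card_image_le
  · exact Finset.mem_image_of_mem _ (by simpa using he)

lemma exists_le_queryProb {V : Type*} [Finite V] (H : SimpleGraph V) {p q : ℝ} (hp0 : 0 < p)
    (hp1 : p ≤ 1) (hq : q < 1) :
    ∃ N, ∃ Q : List Bool → Sym2 ℕ, ValidBuilder Q ∧ q ≤ queryProb H Q N p := by
  obtain ⟨a, T, ha, hdiag, hdisj, hcard, hcopy⟩ := exists_disjoint_blocks H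
  obtain ⟨n, hn⟩ := exists_pow_lt_of_lt_one (sub_pos.2 hq)
    (sub_lt_self 1 (pow_pos hp0 H.edgeSet.ncard))
  obtain ⟨N, hN⟩ := ((Finset.range n).biUnion T).exists_nat_subset_range
  have hTN : ∀ k ∈ Finset.range n, ∀ t ∈ T k, t < N := fun k hk t ht =>
    Finset.mem_range.1 (hN (Finset.mem_biUnion.2 ⟨k, hk, ht⟩))
  refine ⟨N, fun h => a h.length, validBuilder_comp_length ha hdiag, ?_⟩
  have hsuccess : ∀ x : ℕ → Bool,
      (1 : ℝ) - (if ∃ k ∈ Finset.range n, ∀ t ∈ T k, x t then 0 else 1) ≤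
        if ContainsCopy H (fun t => a (histSeq x t).length) x N then 1 else 0 := by
    intro x
    by_cases hx : ∃ k ∈ Finset.range n, ∀ t ∈ T k, x t
    · obtain ⟨k, hk, hkx⟩ := hx
      obtain ⟨f, hf, hfT⟩ := hcopy k
      have hbuilt : ContainsCopy H (fun t => a (histSeq x t).length) x N := by
        refine ⟨f, hf, fun u v huv => ?_⟩
        obtain ⟨t, ht, hat⟩ := hfT s(u, v) huv
        exact ⟨t, hTN k hk t ht, (congrArg a (length_histSeq x t)).trans hat, hkx t ht⟩
      rw [if_pos hbuilt]
      split_ifs <;> norm_num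
    · rw [if_neg hx]
      split_ifs <;> norm_num
  have hblock : ∀ k, 1 - p ^ (T k).card ≤ 1 - p ^ H.edgeSet.ncard := fun k =>
    sub_le_sub_left (pow_le_pow_of_le_one hp0.le hp1 (hcard k)) 1
  calc q ≤ 1 - (1 - p ^ H.edgeSet.ncard) ^ n := by linarith
    _ = 1 - ∏ k ∈ Finset.range n, (1 - p ^ H.edgeSet.ncard) := by simp
    _ ≤ 1 - ∏ k ∈ Finset.range n, (1 - p ^ (T k).card) := by
      refine sub_le_sub_left (Finset.prod_le_prod (fun k _ => ?_) fun k _ => hblock k) 1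
      exact sub_nonneg.2 (pow_le_one₀ hp0.le hp1)
    _ = expect p N fun x => 1 - if ∃ k ∈ Finset.range n, ∀ t ∈ T k, x t then 0 else 1 := by
      rw [expect_sub, expect_const,
        expect_no_successful_block p hTN fun k _ k' _ hkk' => hdisj hkk']
    _ ≤ queryProb H (fun h => a h.length) N p := expect_mono hp0.le hp1 hsuccess

end ExistsStrategy

section Copies

variable {V : Type*} {G G' : SimpleGraph V} {S T : Finset (Sym2 ℕ)} {b : Sym2 ℕ}
  {e e' : Sym2 V} {φ : V → ℕ}

/-- `φ` is a copy of `G` whose edges lie in `S`. Isolated vertices of `G` play no role, and are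
sent to `0` so that `φ` is determined by its values on `G.support`. -/
structure IsCopy (G : SimpleGraph V) (S : Finset (Sym2 ℕ)) (φ : V → ℕ) : Prop where
  eq_zero : ∀ v ∉ G.support, φ v = 0
  injOn : Set.InjOn φ G.support
  map_mem : ∀ e ∈ G.edgeSet, e.map φ ∈ S

lemma IsCopy.mono (h : IsCopy G S φ) (hST : S ⊆ T) : IsCopy G T φ :=
  ⟨h.eq_zero, h.injOn, fun e he => hST (h.map_mem e he)⟩

lemma isCopy_indicator_support (hinj : Set.InjOn φ G.support)
    (hmap : ∀ e ∈ G.edgeSet, e.map φ ∈ S) : IsCopy G S (G.support.indicator φ) where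
  eq_zero v hv := Set.indicator_of_notMem hv φ
  injOn := hinj.congr fun v hv => (Set.indicator_of_mem hv φ).symm
  map_mem := by
    rintro ⟨u, v⟩ (huv : G.Adj u v)
    change s(G.support.indicator φ u, G.support.indicator φ v) ∈ S
    rw [Set.indicator_of_mem huv.left_mem_support, Set.indicator_of_mem huv.right_mem_support]
    exact hmap s(u, v) huv

lemma injOn_sym2_map (hφ : Set.InjOn φ G.support) : Set.InjOn (Sym2.map φ) G.edgeSet := by
  rintro ⟨u, v⟩ (h : G.Adj u v) ⟨u', v'⟩ (h' : G.Adj u' v') (heq : s(φ u, φ v) = s(φ u', φ v'))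
  rw [Sym2.eq_iff, hφ.eq_iff h.left_mem_support h'.left_mem_support,
    hφ.eq_iff h.right_mem_support h'.right_mem_support,
    hφ.eq_iff h.left_mem_support h'.right_mem_support,
    hφ.eq_iff h.right_mem_support h'.left_mem_support] at heq
  exact Sym2.eq_iff.2 heq

lemma IsCopy.map_mem_of_ne (h : IsCopy G (insert b S) φ) (he : e ∈ G.edgeSet)
    (hb : e.map φ = b) (he' : e' ∈ G.edgeSet) (hne : e' ≠ e) : e'.map φ ∈ S :=
  (Finset.mem_insert.1 (h.map_mem e' he')).resolve_left fun hb' =>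
    hne (injOn_sym2_map h.injOn he' he (hb'.trans hb.symm))

variable [Fintype V]

/-- The copies of `G` whose edges lie in `S`. -/
noncomputable def copies (G : SimpleGraph V) (S : Finset (Sym2 ℕ)) : Finset (V → ℕ) :=
  {φ ∈ Fintype.piFinset fun _ => insert 0 (S.biUnion Sym2.toFinset) | IsCopy G S φ}

/-- The copies of `G` that are present once `b` is added to `S` and in which `b` plays the role of
the edge `e`. -/
noncomputable def completions (G : SimpleGraph V) (S : Finset (Sym2 ℕ)) (b : Sym2 ℕ)
    (e : Sym2 V) : Finset (V → ℕ) :=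
  {φ ∈ copies G (insert b S) | e.map φ = b}

lemma mem_copies : φ ∈ copies G S ↔ IsCopy G S φ := by
  refine Finset.mem_filter.trans (and_iff_right_of_imp fun h => Fintype.mem_piFinset.2 fun v => ?_)
  by_cases hv : v ∈ G.support
  · obtain ⟨w, hvw⟩ := hv
    exact Finset.mem_insert_of_mem (Finset.mem_biUnion.2
      ⟨_, h.map_mem _ hvw, Sym2.mem_toFinset.2 (Sym2.mem_map.2 ⟨v, Sym2.mem_mk_left v w, rfl⟩)⟩)
  · exact h.eq_zero v hv ▸ Finset.mem_insert_self _ _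

lemma mem_completions : φ ∈ completions G S b e ↔ IsCopy G (insert b S) φ ∧ e.map φ = b := by
  rw [completions, Finset.mem_filter, mem_copies]

lemma copies_empty (hG : G ≠ ⊥) : copies G ∅ = ∅ := by
  obtain ⟨e, he⟩ := SimpleGraph.edgeSet_nonempty.2 hG
  exact Finset.eq_empty_of_forall_notMem fun φ hφ =>
    Finset.notMem_empty _ ((mem_copies.1 hφ).map_mem e he)

lemma card_copies_insert_le (G : SimpleGraph V) (S : Finset (Sym2 ℕ)) (b : Sym2 ℕ) :
    (copies G (insert b S)).card ≤
      (copies G S).card + ∑ e ∈ G.edgeFinset, (completions G S b e).card := by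
  have hsub : copies G (insert b S) ⊆ copies G S ∪ G.edgeFinset.biUnion (completions G S b) := by
    intro φ hφ
    rw [mem_copies] at hφ
    simp only [Finset.mem_union, mem_copies, Finset.mem_biUnion, SimpleGraph.mem_edgeFinset,
      mem_completions]
    by_cases h : ∃ e ∈ G.edgeSet, e.map φ = b
    · obtain ⟨e, he, hb⟩ := h
      exact Or.inr ⟨e, he, hφ, hb⟩
    · push Not at h
      exact Or.inl ⟨hφ.eq_zero, hφ.injOn, fun e he =>
        (Finset.mem_insert.1 (hφ.map_mem e he)).resolve_left (h e he)⟩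
  calc (copies G (insert b S)).card ≤ _ := Finset.card_le_card hsub
    _ ≤ _ := Finset.card_union_le _ _
    _ ≤ _ := by gcongr; exact Finset.card_biUnion_le

lemma card_completions_le {u v : V} (huv : G.Adj u v) (hle : G' ≤ G.deleteEdges {s(u, v)})
    (hsupp : G.support ⊆ insert u (insert v G'.support)) :
    (completions G S b s(u, v)).card ≤ 2 * (copies G' S).card := by
  have hmaps : ∀ φ ∈ completions G S b s(u, v),
      (G'.support.indicator φ, φ u) ∈ copies G' S ×ˢ b.toFinset := by
    intro φ hφ
    obtain ⟨hcopy, hb⟩ := mem_completions.1 hφ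
    refine Finset.mem_product.2 ⟨mem_copies.2 (isCopy_indicator_support ?_ fun e he => ?_), ?_⟩
    · exact hcopy.injOn.mono (SimpleGraph.support_mono (hle.trans (G.deleteEdges_le _)))
    · have he' : e ∈ G.edgeSet \ {s(u, v)} := by
        rw [← SimpleGraph.edgeSet_deleteEdges]
        exact SimpleGraph.edgeSet_mono hle he
      exact hcopy.map_mem_of_ne huv hb he'.1 he'.2
    · simp [← hb]
  have hinj : Set.InjOn (fun φ : V → ℕ => (G'.support.indicator φ, φ u))
      (completions G S b s(u, v)) := by
    intro φ hφ ψ hψ heq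
    obtain ⟨hφcopy, hφb⟩ := mem_completions.1 hφ
    obtain ⟨hψcopy, hψb⟩ := mem_completions.1 hψ
    obtain ⟨hind, hu : φ u = ψ u⟩ := Prod.ext_iff.1 heq
    have hv : φ v = ψ v := by
      rw [← hψb, Sym2.map_mk, Sym2.map_mk, hu] at hφb
      exact Sym2.congr_right.1 hφb
    funext w
    by_cases hw : w ∈ G.support
    · obtain rfl | rfl | hw' := hsupp hw
      · exact hu
      · exact hv
      · simpa [hw'] using congrFun hind w
    · rw [hφcopy.eq_zero w hw, hψcopy.eq_zero w hw]
  have hb2 : b.toFinset.card ≤ 2 := by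
    rw [Sym2.card_toFinset]
    split_ifs <;> omega
  calc (completions G S b s(u, v)).card ≤ _ := Finset.card_le_card_of_injOn _ hmaps hinj
    _ = (copies G' S).card * b.toFinset.card := Finset.card_product _ _
    _ ≤ 2 * (copies G' S).card := by rw [mul_comm]; gcongr

end Copies

section ExpectedCopies

variable {V : Type*} [Fintype V] {G G' : SimpleGraph V} {Q : List Bool → Sym2 ℕ} {p : ℝ} {N : ℕ}
  {e : Sym2 V}

/-- The successful queries among the first `t` queries of the strategy `Q`, when the answers
are `x`. -/
noncomputable def successes (Q : List Bool → Sym2 ℕ) (x : ℕ → Bool) (t : ℕ) : Finset (Sym2 ℕ) :=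
  {i ∈ Finset.range t | x i}.image fun i => Q (histSeq x i)

/-- The copies of `G` completed by turn `t`, if successful, through a query that plays the role
of the edge `e`. -/
noncomputable def completionsAt (Q : List Bool → Sym2 ℕ) (x : ℕ → Bool) (t : ℕ)
    (G : SimpleGraph V) (e : Sym2 V) : Finset (V → ℕ) :=
  completions G (successes Q x t) (Q (histSeq x t)) e

/-- The expected number of copies of `G` among the successes in the first `N` queries of `Q`. -/
noncomputable def expectedCopies (p : ℝ) (N : ℕ) (Q : List Bool → Sym2 ℕ) (G : SimpleGraph V) : ℝ :=
  expect p N fun x => (copies G (successes Q x N)).card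

/-- The expected number of opportunities, over the first `N` turns of `Q`, to complete a copy of `G`
with a query that plays the role of `e`. A copy counts even if that query then fails. -/
noncomputable def expectedCompletions (p : ℝ) (N : ℕ) (Q : List Bool → Sym2 ℕ) (G : SimpleGraph V)
    (e : Sym2 V) : ℝ :=
  expect p N fun x => ∑ t ∈ Finset.range N, ((completionsAt Q x t G e).card : ℝ)

lemma mem_successes {x : ℕ → Bool} {t : ℕ} {b : Sym2 ℕ} :
    b ∈ successes Q x t ↔ ∃ i < t, x i ∧ Q (histSeq x i) = b := by
  simp [successes, and_assoc]

lemma successes_zero (Q : List Bool → Sym2 ℕ) (x : ℕ → Bool) : successes Q x 0 = ∅ := by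
  simp [successes]

lemma successes_succ (Q : List Bool → Sym2 ℕ) (x : ℕ → Bool) (t : ℕ) : successes Q x (t + 1) =
    if x t then insert (Q (histSeq x t)) (successes Q x t) else successes Q x t := by
  rw [successes, successes, Finset.range_add_one, Finset.filter_insert]
  split_ifs <;> simp

lemma successes_mono (Q : List Bool → Sym2 ℕ) (x : ℕ → Bool) : Monotone (successes Q x) :=
  fun _ _ h => Finset.image_subset_image
    (Finset.filter_subset_filter _ (Finset.range_subset_range.2 h))

lemma successes_congr {x y : ℕ → Bool} {t : ℕ} (h : ∀ i < t, x i = y i) :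
    successes Q x t = successes Q y t := by
  ext b
  simp only [mem_successes]
  refine exists_congr fun i => and_congr_right fun hi => ?_
  rw [h i hi, histSeq_congr fun j hj => h j (hj.trans hi)]

lemma completionsAt_update (x : ℕ → Bool) (t : ℕ) (a : Bool) :
    completionsAt Q (Function.update x t a) t G e = completionsAt Q x t G e := by
  have hagree : ∀ i < t, Function.update x t a i = x i := fun i hi => by
    rw [Function.update_of_ne hi.ne]
  rw [completionsAt, completionsAt, successes_congr hagree, histSeq_congr hagree]

lemma card_copies_successes_le (hG : G ≠ ⊥) (Q : List Bool → Sym2 ℕ) (x : ℕ → Bool) (N : ℕ) :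
    (copies G (successes Q x N)).card ≤
      ∑ t ∈ Finset.range N,
        if x t then ∑ e ∈ G.edgeFinset, (completionsAt Q x t G e).card else 0 := by
  induction N with
  | zero => simp [successes_zero, copies_empty hG]
  | succ N ih =>
    rw [Finset.sum_range_succ, successes_succ]
    split_ifs with hx
    · exact (card_copies_insert_le G _ _).trans (Nat.add_le_add_right ih _)
    · simpa using ih

lemma sum_card_completionsAt_le (hQ : ValidBuilder Q) (he : e ∈ G.edgeSet)
    (hsupp : (G.deleteEdges {e}).support = G.support) (x : ℕ → Bool) (N : ℕ) :
    ∑ t ∈ Finset.range N, (completionsAt Q x t G e).card ≤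
      (copies (G.deleteEdges {e}) (successes Q x N)).card := by
  have hdisj : (Finset.range N : Set ℕ).PairwiseDisjoint fun t => completionsAt Q x t G e := by
    intro t _ t' _ hne
    refine Finset.disjoint_left.2 fun φ hφ hφ' => hne (hQ.injective_query x ?_)
    exact (mem_completions.1 hφ).2.symm.trans (mem_completions.1 hφ').2
  rw [← Finset.card_biUnion hdisj]
  refine Finset.card_le_card fun φ hφ => ?_
  obtain ⟨t, ht, hφt⟩ := Finset.mem_biUnion.1 hφ
  obtain ⟨hcopy, hb⟩ := mem_completions.1 hφt
  refine mem_copies.2 ⟨by rw [hsupp]; exact hcopy.eq_zero, by rw [hsupp]; exact hcopy.injOn, ?_⟩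
  rw [SimpleGraph.edgeSet_deleteEdges]
  exact fun e' he' => successes_mono Q x (Finset.mem_range.1 ht).le
    (hcopy.map_mem_of_ne he hb he'.1 he'.2)

lemma expectedCopies_le (hp0 : 0 ≤ p) (hp1 : p ≤ 1) (N : ℕ) (Q : List Bool → Sym2 ℕ)
    (hG : G ≠ ⊥) :
    expectedCopies p N Q G ≤ p * ∑ e ∈ G.edgeFinset, expectedCompletions p N Q G e := by
  have hturn : ∀ t ∈ Finset.range N,
      (expect p N fun x => if x t then ∑ e ∈ G.edgeFinset, ((completionsAt Q x t G e).card : ℝ)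
        else 0) =
      p * ∑ e ∈ G.edgeFinset, expect p N fun x => ((completionsAt Q x t G e).card : ℝ) := by
    intro t ht
    rw [expect_ite_turn p (Finset.mem_range.1 ht) fun x a => by simp only [completionsAt_update],
      expect_sum]
  calc expectedCopies p N Q G
      ≤ expect p N fun x => ∑ t ∈ Finset.range N,
          if x t then ∑ e ∈ G.edgeFinset, ((completionsAt Q x t G e).card : ℝ) else 0 :=
        expect_mono hp0 hp1 fun x => by exact_mod_cast card_copies_successes_le hG Q x N
    _ = p * ∑ e ∈ G.edgeFinset, expectedCompletions p N Q G e := by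
        simp only [expectedCompletions, expect_sum]
        rw [Finset.sum_congr rfl hturn, ← Finset.mul_sum, Finset.sum_comm]

lemma expectedCompletions_le_deleteEdges (hp0 : 0 ≤ p) (hp1 : p ≤ 1) (N : ℕ)
    (hQ : ValidBuilder Q) (he : e ∈ G.edgeSet)
    (hsupp : (G.deleteEdges {e}).support = G.support) :
    expectedCompletions p N Q G e ≤ expectedCopies p N Q (G.deleteEdges {e}) :=
  expect_mono hp0 hp1 fun x => by exact_mod_cast sum_card_completionsAt_le hQ he hsupp x N

lemma expectedCompletions_le (hp0 : 0 ≤ p) (hp1 : p ≤ 1) (N : ℕ) (Q : List Bool → Sym2 ℕ) {u v : V}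
    (huv : G.Adj u v) (hle : G' ≤ G.deleteEdges {s(u, v)})
    (hsupp : G.support ⊆ insert u (insert v G'.support)) :
    expectedCompletions p N Q G s(u, v) ≤ 2 * N * expectedCopies p N Q G' := by
  rw [expectedCopies, ← expect_const_mul]
  refine expect_mono hp0 hp1 fun x => ?_
  have hturn : ∀ t ∈ Finset.range N, (completionsAt Q x t G s(u, v)).card ≤
      2 * (copies G' (successes Q x N)).card := by
    intro t ht
    refine (card_completions_le huv hle hsupp).trans (Nat.mul_le_mul_left 2 ?_)
    refine Finset.card_le_card fun φ hφ => mem_copies.2 ?_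
    exact (mem_copies.1 hφ).mono (successes_mono Q x (Finset.mem_range.1 ht).le)
  have hsum := Finset.sum_le_card_nsmul _ _ _ hturn
  rw [Finset.card_range, smul_eq_mul] at hsum
  calc ∑ t ∈ Finset.range N, ((completionsAt Q x t G s(u, v)).card : ℝ)
      ≤ N * (2 * (copies G' (successes Q x N)).card) := by exact_mod_cast hsum
    _ = 2 * N * (copies G' (successes Q x N)).card := by ring

lemma queryProb_le_expectedCopies (hp0 : 0 ≤ p) (hp1 : p ≤ 1) (G : SimpleGraph V)
    (Q : List Bool → Sym2 ℕ) (N : ℕ) : queryProb G Q N p ≤ expectedCopies p N Q G := by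
  refine expect_mono (f := fun x =>
    if ContainsCopy G (fun t => Q (histSeq x t)) x N then 1 else 0) hp0 hp1 fun x => ?_
  split_ifs with hx
  · obtain ⟨f, hf, hfG⟩ := hx
    have hcopy : IsCopy G (successes Q x N) (G.support.indicator f) :=
      isCopy_indicator_support hf.injOn <| by
        rintro ⟨u, v⟩ huv
        obtain ⟨t, ht, heq, hxt⟩ := hfG u v huv
        exact mem_successes.2 ⟨t, ht, hxt, heq⟩
    exact_mod_cast Finset.card_pos.2 ⟨_, mem_copies.2 hcopy⟩
  · positivity

end ExpectedCopies

section Matching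

variable {V : Type*} {G : SimpleGraph V} {π : Equiv.Perm V} {a u v w : V} {s : ℕ}

/-- `π` is the involution that exchanges the two ends of each edge of a matching in `G`. Encoding
matchings as permutations turns an exchange of edges into a conjugation by a transposition. -/
structure IsMatchingPerm (G : SimpleGraph V) (π : Equiv.Perm V) : Prop where
  involutive : Function.Involutive π
  adj : ∀ ⦃v⦄, π v ≠ v → G.Adj v (π v)

/-- `G` has a matching with `s` edges, which together cover `2 * s` vertices. -/
def HasMatching [Fintype V] (G : SimpleGraph V) (s : ℕ) : Prop :=
  ∃ π, IsMatchingPerm G π ∧ π.support.card = 2 * s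

/-- The graph obtained from `G` by isolating the vertices `u` and `v`. -/
def isolatePair (G : SimpleGraph V) (u v : V) : SimpleGraph V :=
  (G.deleteIncidenceSet u).deleteIncidenceSet v

lemma isolatePair_adj :
    (isolatePair G u v).Adj a w ↔ G.Adj a w ∧ a ≠ u ∧ w ≠ u ∧ a ≠ v ∧ w ≠ v := by
  simp only [isolatePair, SimpleGraph.deleteIncidenceSet_adj, and_assoc]

lemma isolatePair_le_deleteEdges (G : SimpleGraph V) (u v : V) :
    isolatePair G u v ≤ G.deleteEdges {s(u, v)} := by
  intro a w h
  simp only [isolatePair_adj] at h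
  simp only [SimpleGraph.deleteEdges_adj, Set.mem_singleton_iff, Sym2.eq_iff]
  tauto

lemma ncard_support_isolatePair_add_two_le [Finite V] (h : G.Adj u v) :
    (isolatePair G u v).support.ncard + 2 ≤ G.support.ncard := by
  have hsub : (isolatePair G u v).support ∪ {u, v} ⊆ G.support := by
    refine Set.union_subset (SimpleGraph.support_mono ?_) (Set.pair_subset_iff.2
      ⟨h.left_mem_support, h.right_mem_support⟩)
    exact (isolatePair_le_deleteEdges G u v).trans (G.deleteEdges_le _)
  have hdisj : Disjoint (isolatePair G u v).support {u, v} := by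
    refine Set.disjoint_left.2 fun a hsupp ha => ?_
    obtain ⟨w, haw⟩ := (SimpleGraph.mem_support _).1 hsupp
    rw [isolatePair_adj] at haw
    exact ha.elim haw.2.1 haw.2.2.2.1
  rw [← Set.ncard_pair h.ne, ← Set.ncard_union_eq hdisj]
  exact Set.ncard_le_ncard hsub

lemma ncard_edgeSet_le_isolatePair [Finite V] (G : SimpleGraph V) (u v : V) :
    G.edgeSet.ncard ≤ (isolatePair G u v).edgeSet.ncard +
      ((G.neighborSet u \ {v}).ncard + (G.neighborSet v \ {u}).ncard) + 1 := by
  have hsub : G.edgeSet ⊆ insert s(u, v) ((isolatePair G u v).edgeSet ∪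
      ((fun a => s(u, a)) '' (G.neighborSet u \ {v}) ∪
        (fun a => s(v, a)) '' (G.neighborSet v \ {u}))) := by
    rintro ⟨a, w⟩ (h : G.Adj a w)
    have := h.symm
    simp only [Set.mem_insert_iff, Set.mem_union, Set.mem_image, SimpleGraph.mem_edgeSet,
      Set.mem_sdiff, SimpleGraph.mem_neighborSet, Set.mem_singleton_iff, isolatePair_adj,
      Sym2.eq_iff]
    grind
  calc G.edgeSet.ncard ≤ _ := Set.ncard_le_ncard hsub
    _ ≤ _ := Set.ncard_insert_le _ _
    _ ≤ _ := by
      gcongr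
      refine (Set.ncard_union_le _ _).trans (Nat.add_le_add_left ?_ _)
      refine (Set.ncard_union_le _ _).trans ?_
      exact Nat.add_le_add Set.ncard_image_le Set.ncard_image_le

namespace IsMatchingPerm

lemma swap_mul (hπ : IsMatchingPerm G π) (huv : π u = v) :
    IsMatchingPerm (isolatePair G u v) (Equiv.swap u v * π) where
  involutive a := by
    have := hπ.involutive
    simp only [Equiv.Perm.mul_apply, Equiv.swap_apply_def]
    grind [Function.Involutive]
  adj a ha := by
    have := hπ.involutive
    have := hπ.adj (v := a)
    rw [isolatePair_adj]
    simp only [Equiv.Perm.mul_apply, Equiv.swap_apply_def] at ha ⊢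
    grind [Function.Involutive]

lemma conj_swap (hπ : IsMatchingPerm G π) (huv : π u = v) (hua : G.Adj u a) (hav : a ≠ v)
    (h : π a = a ∨ G.Adj v (π a)) :
    IsMatchingPerm (G.deleteEdges {s(u, v)}) (Equiv.swap v a * π * (Equiv.swap v a)⁻¹) where
  involutive w := by
    simp [hπ.involutive _]
  adj w hw := by
    -- The edges `uv` and, if `a` is matched, `a (π a)` are exchanged for `ua` and `v (π a)`.
    have := hπ.involutive
    have := hπ.adj (v := w)
    have := hua.symm
    have := hua.ne
    have := hπ.adj (v := a)
    have := SimpleGraph.adj_comm G v (π a)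
    simp only [SimpleGraph.deleteEdges_adj, Set.mem_singleton_iff, Sym2.eq_iff, Equiv.swap_inv,
      Equiv.Perm.mul_apply, Equiv.swap_apply_def] at hw ⊢
    grind [Function.Involutive]

lemma deleteEdges (hπ : IsMatchingPerm G π) (huv : π u ≠ v) :
    IsMatchingPerm (G.deleteEdges {s(u, v)}) π where
  involutive := hπ.involutive
  adj w hw := by
    refine SimpleGraph.deleteEdges_adj.2 ⟨hπ.adj hw, ?_⟩
    rw [Set.mem_singleton_iff, Sym2.eq_iff]
    rintro (⟨rfl, h⟩ | ⟨rfl, h⟩)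
    · exact huv h
    · exact huv (h ▸ hπ.involutive w)

end IsMatchingPerm

section Critical

variable [Fintype V]

lemma apply_eq_of_critical (hcrit : ¬ HasMatching (G.deleteEdges {s(u, v)}) s)
    (hπ : IsMatchingPerm G π) (hs : π.support.card = 2 * s) : π u = v := by
  by_contra huv
  exact hcrit ⟨π, hπ.deleteEdges huv, hs⟩

lemma apply_ne_of_critical (hcrit : ¬ HasMatching (G.deleteEdges {s(u, v)}) s)
    (hπ : IsMatchingPerm G π) (hs : π.support.card = 2 * s) (hua : G.Adj u a) (hav : a ≠ v) :
    π a ≠ a ∧ ¬ G.Adj v (π a) := by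
  rw [← not_or]
  intro h
  have huv := apply_eq_of_critical hcrit hπ hs
  exact hcrit ⟨_, hπ.conj_swap huv hua hav h, by rw [Equiv.Perm.card_support_conj, hs]⟩

lemma card_support_sdiff_pair (hπ : IsMatchingPerm G π) (hs : π.support.card = 2 * (s + 1))
    (huv : π u = v) (hne : u ≠ v) : (π.support \ {u, v}).card = 2 * s := by
  have hvu : π v = u := (hπ.involutive.eq_iff.1 huv).symm
  have hsub : {u, v} ⊆ π.support := by
    simp [Finset.insert_subset_iff, huv, hvu, hne, hne.symm]
  rw [Finset.card_sdiff_of_subset hsub, Finset.card_pair hne, hs]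
  omega

lemma hasMatching_isolatePair (hπ : IsMatchingPerm G π) (hs : π.support.card = 2 * (s + 1))
    (huv : π u = v) (hne : u ≠ v) : HasMatching (isolatePair G u v) s := by
  refine ⟨_, hπ.swap_mul huv, ?_⟩
  rw [← card_support_sdiff_pair hπ hs huv hne]
  congr 1
  ext w
  have := hπ.involutive
  simp only [Equiv.Perm.mem_support, Equiv.Perm.mul_apply, Equiv.swap_apply_def,
    Finset.mem_sdiff, Finset.mem_insert, Finset.mem_singleton]
  grind [Function.Involutive]

lemma support_subset_of_critical (hcrit : ¬ HasMatching (G.deleteEdges {s(u, v)}) s)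
    (hπ : IsMatchingPerm G π) (hs : π.support.card = 2 * s) (huv : G.Adj u v) :
    G.support ⊆ insert u (insert v (isolatePair G u v).support) := by
  have hπuv := apply_eq_of_critical hcrit hπ hs
  have hπvu : π v = u := (hπ.involutive.eq_iff.1 hπuv).symm
  intro w hw
  by_contra! hw'
  obtain ⟨hwu, hwv, hw'⟩ : w ≠ u ∧ w ≠ v ∧ w ∉ (isolatePair G u v).support := by
    simpa only [Set.mem_insert_iff, not_or] using hw'
  have hiso : ∀ x, G.Adj w x → x = u ∨ x = v := by
    intro x hwx
    by_contra! hx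
    exact hw' ((SimpleGraph.mem_support _).2 ⟨x, isolatePair_adj.2 ⟨hwx, hwu, hx.1, hwv, hx.2⟩⟩)
  have hmoved : π w ≠ w := by
    obtain ⟨x, hwx⟩ := (SimpleGraph.mem_support _).1 hw
    obtain rfl | rfl := hiso x hwx
    · exact (apply_ne_of_critical hcrit hπ hs hwx.symm hwv).1
    · rw [Sym2.eq_swap] at hcrit
      exact (apply_ne_of_critical hcrit hπ hs hwx.symm hwu).1
  obtain h | h := hiso (π w) (hπ.adj hmoved)
  · exact hwv (π.injective (h.trans hπvu.symm))
  · exact hwu (π.injective (h.trans hπuv.symm))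

lemma ncard_neighborSet_le_of_critical (hcrit : ¬ HasMatching (G.deleteEdges {s(u, v)}) (s + 1))
    (hπ : IsMatchingPerm G π) (hs : π.support.card = 2 * (s + 1)) (huv : G.Adj u v) :
    (G.neighborSet u \ {v}).ncard + (G.neighborSet v \ {u}).ncard ≤ 2 * s := by
  have hπuv := apply_eq_of_critical hcrit hπ hs
  have hπvu : π v = u := (hπ.involutive.eq_iff.1 hπuv).symm
  have hcrit' : ¬ HasMatching (G.deleteEdges {s(v, u)}) (s + 1) := by rwa [Sym2.eq_swap]
  have hu : ∀ a ∈ G.neighborSet u \ {v}, π a ≠ a := fun a ha =>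
    (apply_ne_of_critical hcrit hπ hs ha.1 ha.2).1
  have hv : ∀ b ∈ G.neighborSet v \ {u}, π b ≠ b ∧ ¬ G.Adj u (π b) := fun b hb =>
    apply_ne_of_critical hcrit' hπ hs hb.1 hb.2
  have hdisj : Disjoint (G.neighborSet u \ {v}) (π '' (G.neighborSet v \ {u})) := by
    rw [Set.disjoint_right]
    rintro _ ⟨b, hb, rfl⟩ hb'
    exact (hv b hb).2 hb'.1
  have hsub : G.neighborSet u \ {v} ∪ π '' (G.neighborSet v \ {u}) ⊆
      ((π.support \ {u, v} : Finset V) : Set V) := by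
    rw [Finset.coe_sdiff, Finset.coe_pair]
    rintro a (ha | ⟨b, hb, rfl⟩)
    · exact ⟨Equiv.Perm.mem_support.2 (hu a ha), by
        rintro (rfl | rfl)
        exacts [G.irrefl ha.1, ha.2 rfl]⟩
    · refine ⟨Equiv.Perm.mem_support.2 (π.injective.ne (hv b hb).1), ?_⟩
      rintro (h | h)
      · exact G.irrefl (π.injective (h.trans hπvu.symm) ▸ hb.1)
      · exact hb.2 (π.injective (h.trans hπuv.symm))
  rw [← card_support_sdiff_pair hπ hs hπuv huv.ne, ← Set.ncard_coe_finset,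
    ← Set.ncard_image_of_injective (G.neighborSet v \ {u}) π.injective, ← Set.ncard_union_eq hdisj]
  exact Set.ncard_le_ncard hsub

lemma HasMatching.exists_isolatePair (h : HasMatching G s) (huv : G.Adj u v)
    (hcrit : ¬ HasMatching (G.deleteEdges {s(u, v)}) s) :
    ∃ r, s = r + 1 ∧ HasMatching (isolatePair G u v) r ∧
      G.support ⊆ insert u (insert v (isolatePair G u v).support) ∧
      G.edgeSet.ncard ≤ (isolatePair G u v).edgeSet.ncard + 2 * r + 1 := by
  obtain ⟨π, hπ, hs⟩ := h
  have hπuv := apply_eq_of_critical hcrit hπ hs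
  obtain ⟨r, rfl⟩ : ∃ r, s = r + 1 := by
    refine Nat.exists_eq_succ_of_ne_zero fun h0 => huv.ne ?_
    rw [h0, mul_zero, Finset.card_eq_zero, Equiv.Perm.support_eq_empty_iff] at hs
    rw [← hπuv, hs, Equiv.Perm.one_apply]
  refine ⟨r, rfl, hasMatching_isolatePair hπ hs hπuv huv.ne,
    support_subset_of_critical hcrit hπ hs huv, ?_⟩
  have := ncard_edgeSet_le_isolatePair G u v
  have := ncard_neighborSet_le_of_critical hcrit hπ hs huv
  omega

end Critical

lemma HasMatching.eq_zero_of_bot [Fintype V] (h : HasMatching (⊥ : SimpleGraph V) s) : s = 0 := by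
  obtain ⟨π, hπ, hs⟩ := h
  have hfix : π.support = ∅ :=
    Finset.eq_empty_of_forall_notMem fun v hv => hπ.adj (Equiv.Perm.mem_support.1 hv)
  simpa [hfix] using hs

lemma hasMatching_top [Fintype V] (h : 2 * s ≤ Fintype.card V) :
    HasMatching (⊤ : SimpleGraph V) s := by
  obtain ⟨π, hπ⟩ := (Equiv.Perm.exists_with_cycleType_iff V (m := Multiset.replicate s 2)).2
    ⟨by simpa [mul_comm] using h, fun a ha => (Multiset.eq_of_mem_replicate ha).ge⟩
  have hsq : π ^ 2 = 1 :=
    Equiv.Perm.pow_prime_eq_one_iff.2 fun c hc => Multiset.eq_of_mem_replicate (hπ ▸ hc)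
  refine ⟨π, ⟨fun v => ?_, fun v hv => hv.symm⟩, ?_⟩
  · rw [← Equiv.Perm.mul_apply, ← sq, hsq, Equiv.Perm.one_apply]
  · rw [← Equiv.Perm.sum_cycleType, hπ, Multiset.sum_replicate, smul_eq_mul, mul_comm]

end Matching

section MatchingBound

variable {V : Type*} {G G' : SimpleGraph V} {Q : List Bool → Sym2 ℕ} {p B : ℝ}
  {N s s' : ℕ} {e : Sym2 V}

/-- The bound, up to a factor depending only on `G`, on the expected number of copies of a graph `G`
with a matching of size `s` among the first `N` queries. The exponents are integers because that of
`p` can be negative. -/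
noncomputable def matchingBound (p : ℝ) (N : ℕ) (G : SimpleGraph V) (s : ℕ) : ℝ :=
  (N : ℝ) ^ (G.support.ncard - s : ℤ) * p ^ (G.edgeSet.ncard - s * (s - 1) : ℤ)

lemma matchingBound_nonneg (hp0 : 0 ≤ p) (N : ℕ) (G : SimpleGraph V) (s : ℕ) :
    0 ≤ matchingBound p N G s :=
  mul_nonneg (zpow_nonneg N.cast_nonneg _) (zpow_nonneg hp0 _)

lemma mul_matchingBound_le (hp0 : 0 < p) (hp1 : p ≤ 1) (hN : 1 ≤ N) (k : ℕ)
    (hsupp : (G'.support.ncard - s' + k : ℤ) ≤ G.support.ncard - s)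
    (hedge : (G.edgeSet.ncard - s * (s - 1) : ℤ) ≤ G'.edgeSet.ncard - s' * (s' - 1) + 1) :
    p * (N ^ k * matchingBound p N G' s') ≤ matchingBound p N G s := by
  have hN' : (1 : ℝ) ≤ N := by exact_mod_cast hN
  calc p * (N ^ k * matchingBound p N G' s')
      = (N : ℝ) ^ (G'.support.ncard - s' + k : ℤ) *
          p ^ (G'.edgeSet.ncard - s' * (s' - 1) + 1 : ℤ) := by
        rw [zpow_add₀ (by positivity), zpow_add_one₀ hp0.ne', zpow_natCast, matchingBound]
        ring
    _ ≤ matchingBound p N G s :=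
        mul_le_mul (zpow_le_zpow_right₀ hN' hsupp) (zpow_le_zpow_right_of_le_one₀ hp0 hp1 hedge)
          (zpow_nonneg hp0.le _) (zpow_nonneg N.cast_nonneg _)

lemma support_subset_insert_deleteEdges (G : SimpleGraph V) (u v : V) :
    G.support ⊆ insert u (insert v (G.deleteEdges {s(u, v)}).support) := by
  rintro w ⟨x, hwx⟩
  by_contra! hw
  simp only [Set.mem_insert_iff, SimpleGraph.mem_support, SimpleGraph.deleteEdges_adj,
    Set.mem_singleton_iff, Sym2.eq_iff, not_or, not_exists] at hw
  exact hw.2.2 x ⟨hwx, by tauto⟩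

variable [Fintype V]

lemma mul_expectedCompletions_le_of_le (hp0 : 0 < p) (hp1 : p ≤ 1) (hN : 1 ≤ N) (hB : 0 ≤ B)
    {u v : V} (huv : G.Adj u v) (hle : G' ≤ G.deleteEdges {s(u, v)})
    (hG' : expectedCopies p N Q G' ≤ B * matchingBound p N G' s')
    (hsub : G.support ⊆ insert u (insert v G'.support))
    (hsupp : (G'.support.ncard - s' + 1 : ℤ) ≤ G.support.ncard - s)
    (hedge : (G.edgeSet.ncard - s * (s - 1) : ℤ) ≤ G'.edgeSet.ncard - s' * (s' - 1) + 1) :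
    p * expectedCompletions p N Q G s(u, v) ≤ 2 * B * matchingBound p N G s :=
  calc p * expectedCompletions p N Q G s(u, v)
      ≤ p * (2 * N * expectedCopies p N Q G') := by
        gcongr
        exact expectedCompletions_le hp0.le hp1 N Q huv hle hsub
    _ ≤ p * (2 * N * (B * matchingBound p N G' s')) := by gcongr
    _ = 2 * B * (p * (N ^ 1 * matchingBound p N G' s')) := by ring
    _ ≤ 2 * B * matchingBound p N G s := by
        gcongr
        exact mul_matchingBound_le hp0 hp1 hN 1 (by exact_mod_cast hsupp) hedge

lemma mul_expectedCompletions_le_of_support_eq (hp0 : 0 < p) (hp1 : p ≤ 1) (hN : 1 ≤ N)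
    (hQ : ValidBuilder Q) (hB : 0 ≤ B) (he : e ∈ G.edgeSet)
    (hsupp : (G.deleteEdges {e}).support = G.support)
    (hcard : (G.deleteEdges {e}).edgeSet.ncard + 1 = G.edgeSet.ncard)
    (hX : expectedCopies p N Q (G.deleteEdges {e}) ≤
      B * matchingBound p N (G.deleteEdges {e}) s) :
    p * expectedCompletions p N Q G e ≤ 2 * B * matchingBound p N G s :=
  calc p * expectedCompletions p N Q G e
      ≤ p * expectedCopies p N Q (G.deleteEdges {e}) := by
        gcongr
        exact expectedCompletions_le_deleteEdges hp0.le hp1 N hQ he hsupp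
    _ ≤ p * (B * matchingBound p N (G.deleteEdges {e}) s) := by gcongr
    _ = B * (p * (N ^ 0 * matchingBound p N (G.deleteEdges {e}) s)) := by ring
    _ ≤ B * matchingBound p N G s := by
        gcongr
        exact mul_matchingBound_le hp0 hp1 hN 0 (by simp [hsupp]) (by omega)
    _ ≤ 2 * B * matchingBound p N G s := by
        linarith [mul_nonneg hB (matchingBound_nonneg hp0.le N G s)]

lemma mul_expectedCompletions_le (hp0 : 0 < p) (hp1 : p ≤ 1) (hN : 1 ≤ N) (hQ : ValidBuilder Q)
    (hB : 0 ≤ B) (h : HasMatching G s) (he : e ∈ G.edgeSet)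
    (ih : ∀ (G' : SimpleGraph V) (s' : ℕ), HasMatching G' s' →
      G'.edgeSet.ncard < G.edgeSet.ncard → expectedCopies p N Q G' ≤ B * matchingBound p N G' s') :
    p * expectedCompletions p N Q G e ≤ 2 * B * matchingBound p N G s := by
  obtain ⟨u, v⟩ := e
  change G.Adj u v at he
  change p * expectedCompletions p N Q G s(u, v) ≤ _
  have hcard : (G.deleteEdges {s(u, v)}).edgeSet.ncard + 1 = G.edgeSet.ncard := by
    rw [SimpleGraph.edgeSet_deleteEdges]
    exact Set.ncard_sdiff_singleton_add_one he
  have hle := G.deleteEdges_le {s(u, v)}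
  by_cases hmatch : HasMatching (G.deleteEdges {s(u, v)}) s
  · have hX := ih _ s hmatch (by omega)
    by_cases hsupp : (G.deleteEdges {s(u, v)}).support = G.support
    · exact mul_expectedCompletions_le_of_support_eq hp0 hp1 hN hQ hB he hsupp hcard hX
    · have hlt := Set.ncard_lt_ncard ((SimpleGraph.support_mono hle).ssubset_of_ne hsupp)
      exact mul_expectedCompletions_le_of_le hp0 hp1 hN hB he le_rfl hX
        (support_subset_insert_deleteEdges G u v) (by omega) (by omega)
  · obtain ⟨r, rfl, hr, hsub, hedge⟩ := h.exists_isolatePair he hmatch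
    have hiso := isolatePair_le_deleteEdges G u v
    have hltE := Set.ncard_le_ncard (SimpleGraph.edgeSet_mono hiso)
    have hsupp := ncard_support_isolatePair_add_two_le he
    have hX := ih _ r hr (by omega)
    refine mul_expectedCompletions_le_of_le hp0 hp1 hN hB he hiso hX hsub (by omega) ?_
    push_cast
    linarith

lemma expectedCopies_bot_le_one (hp0 : 0 ≤ p) (hp1 : p ≤ 1) (N : ℕ) (Q : List Bool → Sym2 ℕ) :
    expectedCopies p N Q (⊥ : SimpleGraph V) ≤ 1 := by
  refine (expect_mono hp0 hp1 fun x => ?_).trans_eq (expect_const p N 1)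
  have hsub : copies (⊥ : SimpleGraph V) (successes Q x N) ⊆ {0} := fun φ hφ => by
    refine Finset.mem_singleton.2 (funext fun v => (mem_copies.1 hφ).eq_zero v ?_)
    simp
  exact_mod_cast Finset.card_le_card hsub

theorem expectedCopies_le_matchingBound (hp0 : 0 < p) (hp1 : p ≤ 1) (hN : 1 ≤ N)
    (hQ : ValidBuilder Q) (h : HasMatching G s) :
    expectedCopies p N Q G ≤
      2 ^ G.edgeSet.ncard * G.edgeSet.ncard.factorial * matchingBound p N G s := by
  induction hn : G.edgeSet.ncard using Nat.strong_induction_on generalizing G s with | _ n ih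
  obtain rfl | hG := eq_or_ne G ⊥
  · obtain rfl := h.eq_zero_of_bot
    obtain rfl : n = 0 := by simpa using hn.symm
    simpa [matchingBound] using expectedCopies_bot_le_one hp0.le hp1 N Q
  · have hpos : 0 < G.edgeSet.ncard := (Set.ncard_pos).2 (SimpleGraph.edgeSet_nonempty.2 hG)
    obtain ⟨k, rfl⟩ : ∃ k, n = k + 1 := Nat.exists_eq_succ_of_ne_zero (by omega)
    set B : ℝ := 2 ^ k * k.factorial with hB
    have hedge : ∀ e ∈ G.edgeFinset,
        p * expectedCompletions p N Q G e ≤ 2 * B * matchingBound p N G s := by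
      refine fun e he => mul_expectedCompletions_le hp0 hp1 hN hQ (by positivity) h
        (SimpleGraph.mem_edgeFinset.1 he) fun G' s' h' hlt => ?_
      rw [hn, Nat.lt_succ_iff] at hlt
      refine (ih _ (Nat.lt_succ_of_le hlt) h' rfl).trans ?_
      rw [hB]
      gcongr
      · exact matchingBound_nonneg hp0.le N G' s'
      · norm_num
    calc expectedCopies p N Q G
        ≤ p * ∑ e ∈ G.edgeFinset, expectedCompletions p N Q G e :=
          expectedCopies_le hp0.le hp1 N Q hG
      _ ≤ G.edgeFinset.card * (2 * B * matchingBound p N G s) := by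
          rw [Finset.mul_sum, ← nsmul_eq_mul]
          exact Finset.sum_le_card_nsmul _ _ _ hedge
      _ = (k + 1) * (2 * B * matchingBound p N G s) := by
          rw [← SimpleGraph.coe_edgeFinset, Set.ncard_coe_finset] at hn
          rw [hn, Nat.cast_succ]
      _ = 2 ^ (k + 1) * (k + 1).factorial * matchingBound p N G s := by
          rw [hB, Nat.factorial_succ]
          push_cast
          ring

end MatchingBound

section LowerBound

variable {V : Type*} {H : SimpleGraph V} {p : ℝ} {s : ℕ}

lemma fQuery_spec [Finite V] (H : SimpleGraph V) (hp0 : 0 < p) (hp1 : p ≤ 1) :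
    ∃ Q, ValidBuilder Q ∧ 1 / 2 ≤ queryProb H Q (fQuery H p) p :=
  Nat.sInf_mem (s := {N | ∃ Q, ValidBuilder Q ∧ 1 / 2 ≤ queryProb H Q N p})
    (exists_le_queryProb H hp0 hp1 one_half_lt_one)

lemma one_le_fQuery [Finite V] (hH : H ≠ ⊥) (hp0 : 0 < p) (hp1 : p ≤ 1) : 1 ≤ fQuery H p := by
  have := Fintype.ofFinite V
  obtain ⟨Q, -, hprob⟩ := fQuery_spec H hp0 hp1
  by_contra! h0
  rw [Nat.lt_one_iff.1 h0] at hprob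
  have hzero : expectedCopies p 0 Q H = 0 := by
    simp [expectedCopies, successes_zero, copies_empty hH, expect_const]
  linarith [queryProb_le_expectedCopies hp0.le hp1 H Q 0]

variable [Fintype V]

theorem half_le_matchingBound_fQuery (hH : H ≠ ⊥) (h : HasMatching H s) (hp0 : 0 < p)
    (hp1 : p ≤ 1) :
    1 / 2 ≤ 2 ^ H.edgeSet.ncard * H.edgeSet.ncard.factorial *
      matchingBound p (fQuery H p) H s := by
  obtain ⟨Q, hQ, hprob⟩ := fQuery_spec H hp0 hp1
  exact hprob.trans ((queryProb_le_expectedCopies hp0.le hp1 H Q _).trans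
    (expectedCopies_le_matchingBound hp0 hp1 (one_le_fQuery hH hp0 hp1) hQ h))

lemma ncard_edgeSet_top : (⊤ : SimpleGraph V).edgeSet.ncard = (Fintype.card V).choose 2 := by
  rw [← SimpleGraph.coe_edgeFinset, Set.ncard_coe_finset,
    SimpleGraph.card_edgeFinset_top_eq_card_choose_two]

lemma matchingBound_top [Nontrivial V] (p : ℝ) (N : ℕ) (hs : s ≤ Fintype.card V) :
    matchingBound p N (⊤ : SimpleGraph V) s =
      N ^ (Fintype.card V - s) * p ^ ((Fintype.card V).choose 2 - s * (s - 1) : ℝ) := by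
  rw [matchingBound, ncard_edgeSet_top, SimpleGraph.support_top_of_nontrivial, Set.ncard_univ,
    Nat.card_eq_fintype_card, ← Nat.cast_sub hs, zpow_natCast, ← Real.rpow_intCast]
  norm_cast

lemma exponent_le {m r : ℝ} (hm : 1 ≤ m) (hr : r ≤ (1 - √2 / 2) * m)
    (hr' : (1 - √2 / 2) * m ≤ r + 1) :
    ((2 - √2) * m - 2) * (m - r) ≤ m * (m - 1) / 2 - r * (r - 1) := by
  have hsqrt : √2 * √2 = 2 := Real.mul_self_sqrt zero_le_two
  have hgap : m * (m - 1) / 2 - r * (r - 1) - ((2 - √2) * m - 2) * (m - r) =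
      3 * m / 2 - r - ((1 - √2 / 2) * m - r) ^ 2 := by
    linear_combination (m ^ 2 / 4) * hsqrt
  have hsq : ((1 - √2 / 2) * m - r) ^ 2 ≤ 1 := pow_le_one₀ (by linarith) (by linarith)
  have hhalf : r ≤ m / 2 := by
    nlinarith [Real.one_le_sqrt.2 one_le_two]
  linarith

lemma mul_rpow_neg_le_of_le_pow_mul_rpow {c x ℓ E : ℝ} {d : ℕ} (hd : d ≠ 0) (hc0 : 0 ≤ c)
    (hc1 : c ≤ 1) (hp0 : 0 < p) (hp1 : p ≤ 1) (hx : 0 ≤ x) (hE : ℓ * d ≤ E)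
    (h : c ≤ x ^ d * p ^ E) : c * p ^ (-ℓ) ≤ x := by
  refine (pow_le_pow_iff_left₀ (by positivity) hx hd).1 ?_
  calc (c * p ^ (-ℓ)) ^ d = c ^ d * p ^ (-(ℓ * d)) := by
        rw [mul_pow, ← Real.rpow_mul_natCast hp0.le, neg_mul]
    _ ≤ c * p ^ (-E) := by
        gcongr ?_ * ?_
        · exact pow_le_of_le_one hc0 hc1 hd
        · exact Real.rpow_le_rpow_of_exponent_ge hp0 hp1 (neg_le_neg hE)
    _ ≤ x ^ d * p ^ E * p ^ (-E) := by gcongr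
    _ = x ^ d := by rw [mul_assoc, ← Real.rpow_add hp0, add_neg_cancel, Real.rpow_zero, mul_one]

theorem mul_rpow_neg_le_fQuery_top [Nontrivial V] {ℓ : ℝ} (hp0 : 0 < p) (hp1 : p ≤ 1)
    (hs : 2 * s ≤ Fintype.card V)
    (hℓ : ℓ * (Fintype.card V - s) ≤ (Fintype.card V).choose 2 - s * (s - 1)) :
    1 / (2 * (2 ^ (Fintype.card V).choose 2 * ((Fintype.card V).choose 2).factorial)) *
      p ^ (-ℓ) ≤ fQuery (⊤ : SimpleGraph V) p := by
  have hcard : 1 < Fintype.card V := Fintype.one_lt_card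
  have hbound := half_le_matchingBound_fQuery top_ne_bot (hasMatching_top hs) hp0 hp1
  rw [ncard_edgeSet_top, matchingBound_top p _ (by omega)] at hbound
  set D : ℝ := 2 ^ (Fintype.card V).choose 2 * ((Fintype.card V).choose 2).factorial
  have hD : 1 ≤ D := one_le_mul_of_one_le_of_one_le (one_le_pow₀ one_le_two)
    (Nat.one_le_cast.2 (Nat.factorial_pos _))
  refine mul_rpow_neg_le_of_le_pow_mul_rpow (d := Fintype.card V - s)
    (E := (Fintype.card V).choose 2 - s * (s - 1)) (by omega) (by positivity) ?_ hp0 hp1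
    (Nat.cast_nonneg _) (by rwa [Nat.cast_sub (by omega)]) ?_
  · rw [div_le_one (by positivity)]
    linarith
  · rwa [← div_div, div_le_iff₀' (by positivity)]

end LowerBound

theorem stmt9 :
    ∃ C : ℝ, 0 < C ∧ ∀ m : ℕ, 3 ≤ m → ∃ c : ℝ, 0 < c ∧
      ∀ p : ℝ, p ∈ Set.Ioo (0 : ℝ) 1 →
        c * p ^ (-((2 - Real.sqrt 2) * (m : ℝ) - C)) ≤ (fQuery (K m) p : ℝ) := by
  refine ⟨2, two_pos, fun m hm => ?_⟩
  have hm1 : (1 : ℝ) ≤ m := by exact_mod_cast (by omega : 1 ≤ m)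
  have : Nontrivial (Fin m) := Fin.nontrivial_iff_two_le.2 (by omega)
  let r := ⌊(1 - √2 / 2) * m⌋₊
  have hr : (r : ℝ) ≤ (1 - √2 / 2) * m :=
    Nat.floor_le (mul_nonneg (by linarith [Real.sqrt_two_lt_three_halves]) m.cast_nonneg)
  have hr' : (1 - √2 / 2) * m ≤ r + 1 := (Nat.lt_floor_add_one _).le
  have hrm : 2 * r ≤ m := by
    have : 2 * (r : ℝ) ≤ m := by nlinarith [Real.one_le_sqrt.2 one_le_two]
    exact_mod_cast this
  refine ⟨1 / (2 * (2 ^ m.choose 2 * (m.choose 2).factorial)), by positivity, fun p hp => ?_⟩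
  have hbound := mul_rpow_neg_le_fQuery_top (V := Fin m) (s := r) (ℓ := (2 - √2) * m - 2)
    hp.1 hp.2.le (by rwa [Fintype.card_fin])
    (by simpa only [Fintype.card_fin, Nat.cast_choose_two] using exponent_le hm1 hr hr')
  rwa [Fintype.card_fin] at hbound

end OnlineRamseyGame
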